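/- Let M ∈ F_q[T] be monic irreducible of degree d, F = F_q(T), and K = F(Λ_M) the splitting field of the Carlitz polynomial C_M(Z). Then K/F is Galois of degree q^d − 1 with Galois group isomorphic to the cyclic group (F_q[T]/(M))^*, where the automorphism σ_N corresponding to N mod M is determined by σ_N(λ) = C_N(λ) for any fixed nonzero root λ of C_M. -/

import Mathlib

open Polynomial

/-- The defining properties of the Carlitz module `M ↦ C_M(Z)` over `Fq[T]`. -/
structure IsCarlitzModule (Fq : Type*) [Field Fq] [Fintype Fq] (Carl : Fq[X] → Fq[X][X]) :
    Prop where
  one : Carl 1 = X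
  var : Carl X = X ^ Fintype.card Fq + C X * X
  add : ∀ M N, Carl (M + N) = Carl M + Carl N
  smul : ∀ a M, Carl (C a * M) = C (C a) * Carl M
  mul : ∀ M N, Carl (M * N) = (Carl M).comp (Carl N)

/-- The lowest exponent of a polynomial commuting with `X ^ q + t X` fixes `t`. -/
lemma pow_natTrailingDegree_eq_of_comp_eq {k : Type*} [CommRing k] [IsDomain k] {q : ℕ}
    (hq : 2 ≤ q) {t : k} {P : k[X]} (hP : P ≠ 0) (h0 : P.coeff 0 = 0)
    (hcomp : P.comp (X ^ q + C t * X) = P ^ q + C t * P) : t ^ P.natTrailingDegree = t := by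
  have hc : P.coeff P.natTrailingDegree ≠ 0 := trailingCoeff_nonzero_iff_nonzero.mpr hP
  obtain ⟨S, hS⟩ : X ^ P.natTrailingDegree ∣ P :=
    X_pow_dvd_iff.mpr fun _ h => coeff_eq_zero_of_lt_natTrailingDegree h
  have hm : P.natTrailingDegree ≠ 0 := fun h => hc (h ▸ h0)
  generalize P.natTrailingDegree = m at *
  have hS0 : S.coeff 0 ≠ 0 := by
    rw [hS] at hc
    simpa [coeff_X_pow_mul'] using hc
  obtain ⟨r, rfl⟩ : ∃ r, q = r + 2 := ⟨q - 2, by omega⟩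
  obtain ⟨l, rfl⟩ : ∃ l, m = l + 1 := ⟨m - 1, by omega⟩
  have key : (X : k[X]) ^ (l + 1) *
      ((X ^ (r + 1) + C t) ^ (l + 1) * S.comp (X ^ (r + 2) + C t * X)) =
      X ^ (l + 1) * (X ^ ((l + 1) * (r + 1)) * S ^ (r + 2) + C t * S) := by
    rw [hS] at hcomp
    simp only [mul_comp, X_pow_comp] at hcomp
    have hX : (X ^ (r + 2) + C t * X : k[X]) = X * (X ^ (r + 1) + C t) := by ring
    nth_rewrite 1 [hX] at hcomp
    rw [mul_pow] at hcomp
    linear_combination hcomp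
  have h := congrArg (eval 0) (mul_left_cancel₀ (pow_ne_zero _ X_ne_zero) key)
  rw [coeff_zero_eq_eval_zero] at hS0
  have h' : t ^ (l + 1) * eval 0 S = t * eval 0 S := by
    simpa [eval_comp] using h
  exact mul_right_cancel₀ hS0 h'

namespace IsCarlitzModule

variable {Fq : Type*} [Field Fq] [Fintype Fq] {Carl : Fq[X] → Fq[X][X]}

lemma zero (hC : IsCarlitzModule Fq Carl) : Carl 0 = 0 := by
  simpa using hC.add 0 0

lemma X_mul (hC : IsCarlitzModule Fq Carl) (N : Fq[X]) :
    Carl (X * N) = Carl N ^ Fintype.card Fq + C X * Carl N := by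
  rw [hC.mul, hC.var]; simp

lemma mul_X (hC : IsCarlitzModule Fq Carl) (N : Fq[X]) :
    (Carl N).comp (X ^ Fintype.card Fq + C X * X) = Carl N ^ Fintype.card Fq + C X * Carl N := by
  rw [← hC.var, ← hC.mul, mul_comm, hC.X_mul]

lemma induction (hC : IsCarlitzModule Fq Carl) {p : Fq[X] → Fq[X][X] → Prop} (h1 : p 1 X)
    (hadd : ∀ M N f g, p M f → p N g → p (M + N) (f + g))
    (hsmul : ∀ a M f, p M f → p (C a * M) (C (C a) * f))
    (hX : ∀ M f, p M f → p (X * M) (f ^ Fintype.card Fq + C X * f)) (N : Fq[X]) :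
    p N (Carl N) := by
  have hpow : ∀ n : ℕ, p (X ^ n) (Carl (X ^ n)) := by
    intro n
    induction n with
    | zero => simpa [hC.one] using h1
    | succ n ih => rw [pow_succ', hC.X_mul]; exact hX _ _ ih
  induction N using Polynomial.induction_on' with
  | add M N hM hN => rw [hC.add]; exact hadd _ _ _ _ hM hN
  | monomial n a => rw [← C_mul_X_pow_eq_monomial, hC.smul]; exact hsmul _ _ _ (hpow n)

lemma derivative (hC : IsCarlitzModule Fq Carl) (N : Fq[X]) :
    Polynomial.derivative (Carl N) = C N := by
  refine hC.induction (p := fun N f => Polynomial.derivative f = C N) ?_ ?_ ?_ ?_ N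
  · simp
  · intro M N f g hf hg; simp [hf, hg]
  · intro a M f hf; simp [hf]
  · intro M f hf
    have : (Fintype.card Fq : Fq[X][X]) = 0 := by
      rw [← map_natCast (algebraMap Fq Fq[X][X]), FiniteField.cast_card_eq_zero, map_zero]
    simp [derivative_pow, hf, this]

lemma coeff_zero (hC : IsCarlitzModule Fq Carl) (N : Fq[X]) : (Carl N).coeff 0 = 0 := by
  refine hC.induction (p := fun N f => f.coeff 0 = 0) ?_ ?_ ?_ ?_ N
  · simp
  · intro M N f g hf hg; simp [hf, hg]
  · intro a M f hf; simp [hf]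
  · intro M f hf
    rw [coeff_zero_eq_eval_zero] at hf ⊢
    simp [hf, Fintype.card_ne_zero]

lemma coeff_one (hC : IsCarlitzModule Fq Carl) (N : Fq[X]) : (Carl N).coeff 1 = N := by
  have := congrArg (fun f => f.coeff 0) (hC.derivative N)
  simpa [coeff_derivative] using this

lemma mem_span (hC : IsCarlitzModule Fq Carl) (N : Fq[X]) :
    Carl N ∈ Submodule.span Fq[X] (Set.range fun i : ℕ => (X : Fq[X][X]) ^ Fintype.card Fq ^ i) := by
  refine hC.induction (p := fun N f => f ∈ Submodule.span Fq[X]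
    (Set.range fun i : ℕ => (X : Fq[X][X]) ^ Fintype.card Fq ^ i)) ?_ ?_ ?_ ?_ N
  · exact Submodule.subset_span ⟨0, by simp⟩
  · intro M N f g hf hg; exact add_mem hf hg
  · intro a M f hf; rw [← smul_eq_C_mul]; exact Submodule.smul_mem _ _ hf
  · intro M f hf
    rw [← smul_eq_C_mul]
    refine add_mem ?_ (Submodule.smul_mem _ _ hf)
    have hfrob (g : Fq[X][X]) : g ^ Fintype.card Fq = FiniteField.frobeniusAlgHom Fq _ g := rfl
    induction hf using Submodule.span_induction with
    | mem x h =>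
      obtain ⟨i, rfl⟩ := h
      exact Submodule.subset_span ⟨i + 1, by simp [pow_succ, pow_mul]⟩
    | zero => simp [Fintype.card_ne_zero]
    | add x y _ _ hx hy => rw [hfrob, map_add, ← hfrob, ← hfrob]; exact add_mem hx hy
    | smul a x _ hx =>
      rw [smul_eq_C_mul, mul_pow, ← C_pow, ← smul_eq_C_mul]
      exact Submodule.smul_mem _ _ hx

lemma exists_eq_pow_of_coeff_ne_zero (hC : IsCarlitzModule Fq Carl) {N : Fq[X]} {n : ℕ}
    (hn : (Carl N).coeff n ≠ 0) : ∃ i, n = Fintype.card Fq ^ i := by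
  by_contra! h
  refine hn ?_
  have hspan := hC.mem_span N
  clear hn
  generalize Carl N = f at *
  induction hspan using Submodule.span_induction with
  | mem x hx => obtain ⟨i, rfl⟩ := hx; simp [coeff_X_pow, h i]
  | zero => simp
  | add x y _ _ hx hy => simp [hx, hy]
  | smul a x _ hx => simp [hx]

lemma monic_X_pow (hC : IsCarlitzModule Fq Carl) (n : ℕ) :
    (Carl (X ^ n)).Monic ∧ (Carl (X ^ n)).natDegree = Fintype.card Fq ^ n := by
  induction n with
  | zero => simp [hC.one, monic_X]
  | succ n ih =>
    have hlt : (C X * X : Fq[X][X]).degree < (X ^ Fintype.card Fq : Fq[X][X]).degree := by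
      rw [degree_C_mul_X X_ne_zero, degree_X_pow]
      exact_mod_cast Fintype.one_lt_card
    have hm : (X ^ Fintype.card Fq + C X * X : Fq[X][X]).Monic :=
      (Polynomial.monic_X_pow _).add_of_left hlt
    have hd : (X ^ Fintype.card Fq + C X * X : Fq[X][X]).natDegree = Fintype.card Fq := by
      rw [natDegree_add_eq_left_of_degree_lt hlt, natDegree_X_pow]
    rw [pow_succ', hC.mul, hC.var, natDegree_comp, hd, ih.2, pow_succ']
    refine ⟨hm.comp ih.1 ?_, rfl⟩
    rw [ih.2]
    exact pow_ne_zero _ Fintype.card_ne_zero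

lemma monic_and_natDegree (hC : IsCarlitzModule Fq Carl) {M : Fq[X]} (hM : M.Monic) :
    (Carl M).Monic ∧ (Carl M).natDegree = Fintype.card Fq ^ M.natDegree := by
  let φ : Fq[X] →+ Fq[X][X] := AddMonoidHom.mk' Carl hC.add
  have hsum : Carl M = Carl (X ^ M.natDegree) +
      ∑ i ∈ Finset.range M.natDegree, C (C (M.coeff i)) * Carl (X ^ i) := by
    conv_lhs => rw [hM.as_sum]
    change φ _ = φ _ + _
    rw [map_add, map_sum]
    congr 1
    exact Finset.sum_congr rfl fun i _ => hC.smul _ _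
  have hlt : (∑ i ∈ Finset.range M.natDegree, C (C (M.coeff i)) * Carl (X ^ i)).degree <
      (Carl (X ^ M.natDegree)).degree := by
    obtain ⟨hm, hd⟩ := hC.monic_X_pow M.natDegree
    rw [degree_eq_natDegree hm.ne_zero, hd]
    refine (Finset.sup_lt_iff (WithBot.bot_lt_coe _)).mpr ?_ |>.trans_le' (degree_sum_le _ _)
    intro i hi
    rw [← smul_eq_C_mul]
    refine (degree_smul_le _ _).trans_lt (degree_le_natDegree.trans_lt ?_)
    rw [(hC.monic_X_pow i).2]
    exact_mod_cast Nat.pow_lt_pow_right Fintype.one_lt_card (Finset.mem_range.mp hi)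
  rw [hsum, natDegree_add_eq_left_of_degree_lt hlt]
  exact ⟨(hC.monic_X_pow _).1.add_of_left hlt, (hC.monic_X_pow _).2⟩

end IsCarlitzModule

section ResidueField

variable {Fq : Type*} [Field Fq] [Fintype Fq] {M : Fq[X]}

lemma natCard_quotient_span (hM : M.Monic) :
    Nat.card (Fq[X] ⧸ Ideal.span {M}) = Fintype.card Fq ^ M.natDegree := by
  have : Module.Finite Fq (Fq[X] ⧸ Ideal.span {M}) := hM.finite_quotient
  rw [Module.natCard_eq_pow_finrank (K := Fq), finrank_quotient_span_eq_natDegree,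
    Nat.card_eq_fintype_card]

lemma finite_quotient_span (hM : M.Monic) : Finite (Fq[X] ⧸ Ideal.span {M}) :=
  Nat.finite_of_card_ne_zero <| by
    rw [natCard_quotient_span hM]; exact pow_ne_zero _ Fintype.card_ne_zero

lemma natCard_units_quotient_span (hM : M.Monic) (hirr : Irreducible M) :
    Nat.card (Fq[X] ⧸ Ideal.span {M})ˣ = Fintype.card Fq ^ M.natDegree - 1 := by
  have := PrincipalIdealRing.isMaximal_of_irreducible hirr
  let := Ideal.Quotient.field (Ideal.span {M})
  rw [← natCard_quotient_span hM]
  exact Nat.card_units _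

/-- The class of `T` in the residue field has exact Frobenius period `deg M`. -/
lemma natDegree_le_of_mk_X_pow_eq (hM : M.Monic) (hirr : Irreducible M) {i : ℕ} (hi : i ≠ 0)
    (h : Ideal.Quotient.mk (Ideal.span {M}) X ^ Fintype.card Fq ^ i =
      Ideal.Quotient.mk (Ideal.span {M}) X) : M.natDegree ≤ i := by
  have := PrincipalIdealRing.isMaximal_of_irreducible hirr
  have := finite_quotient_span hM
  have hfrob : ∀ x : Fq[X] ⧸ Ideal.span {M}, x ^ Fintype.card Fq ^ i = x := by
    have hF : ((FiniteField.frobeniusAlgHom Fq _) ^ i).comp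
        (Ideal.Quotient.mkₐ Fq (Ideal.span {M})) = Ideal.Quotient.mkₐ Fq (Ideal.span {M}) := by
      refine Polynomial.algHom_ext ?_
      simpa [FiniteField.coe_frobeniusAlgHom, pow_iterate] using h
    intro x
    obtain ⟨N, rfl⟩ := Ideal.Quotient.mk_surjective x
    simpa [FiniteField.coe_frobeniusAlgHom, pow_iterate] using DFunLike.congr_fun hF N
  have hq : 1 < Fintype.card Fq := Fintype.one_lt_card
  let := Ideal.Quotient.field (Ideal.span {M})
  have := Fintype.ofFinite (Fq[X] ⧸ Ideal.span {M})
  have h1 := Nat.one_lt_pow hi hq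
  have hcard := Polynomial.card_le_degree_of_subset_roots
    (p := (X ^ Fintype.card Fq ^ i - X : (Fq[X] ⧸ Ideal.span {M})[X])) (Z := Finset.univ)
    fun x _ => by
      rw [mem_roots (FiniteField.X_pow_card_sub_X_ne_zero _ h1)]
      simp [hfrob x]
  rw [FiniteField.X_pow_card_sub_X_natDegree_eq _ h1, Finset.card_univ,
    ← Nat.card_eq_fintype_card, natCard_quotient_span hM] at hcard
  exact (Nat.pow_le_pow_iff_right hq).mp hcard

end ResidueField

namespace IsCarlitzModule

section Action

variable {Fq K : Type*} [Field Fq] [Field K] [Algebra (RatFunc Fq) K]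

/-- The action of `N` on a point of the Carlitz module over `K`. -/
noncomputable abbrev act (Carl : Fq[X] → Fq[X][X]) (N : Fq[X]) (x : K) : K :=
  aeval x ((Carl N).map (algebraMap Fq[X] (RatFunc Fq)))

lemma map_act (Carl : Fq[X] → Fq[X][X]) {L : Type*} [Field L] [Algebra (RatFunc Fq) L] (σ : K →ₐ[RatFunc Fq] L)
    (N : Fq[X]) (x : K) : σ (act Carl N x) = act Carl N (σ x) := by
  simp [act, aeval_algHom_apply]

end Action

variable {Fq : Type*} [Field Fq] [Fintype Fq] {Carl : Fq[X] → Fq[X][X]} {M : Fq[X]}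

/-- For `M` irreducible, every coefficient of `C_M` below the leading one is divisible by `M`. -/
lemma dvd_coeff (hC : IsCarlitzModule Fq Carl) (hM : M.Monic) (hirr : Irreducible M) {n : ℕ}
    (hn : n < Fintype.card Fq ^ M.natDegree) : M ∣ (Carl M).coeff n := by
  have := PrincipalIdealRing.isMaximal_of_irreducible hirr
  set π := Ideal.Quotient.mk (Ideal.span {M})
  set P := (Carl M).map π with hPdef
  obtain ⟨hmon, -⟩ := hC.monic_and_natDegree hM
  have hP : P ≠ 0 := (hmon.map π).ne_zero
  have hcomp : P.comp (X ^ Fintype.card Fq + C (π X) * X) =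
      P ^ Fintype.card Fq + C (π X) * P := by
    have := congrArg (Polynomial.map π) (hC.mul_X M)
    simpa [Polynomial.map_comp] using this
  have hfix := pow_natTrailingDegree_eq_of_comp_eq Fintype.one_lt_card hP
    (by simp [P, hC.coeff_zero]) hcomp
  have htrail : P.coeff P.natTrailingDegree ≠ 0 := trailingCoeff_nonzero_iff_nonzero.mpr hP
  have hle : Fintype.card Fq ^ M.natDegree ≤ P.natTrailingDegree := by
    obtain ⟨i, hi⟩ : ∃ i, P.natTrailingDegree = Fintype.card Fq ^ i :=
      hC.exists_eq_pow_of_coeff_ne_zero (N := M) fun h => htrail (by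
        rw [hPdef, coeff_map, ← hPdef, h, map_zero])
    rw [hi] at hfix htrail ⊢
    refine Nat.pow_le_pow_right Fintype.card_pos (natDegree_le_of_mk_X_pow_eq hM hirr ?_ hfix)
    rintro rfl
    refine htrail ?_
    rw [pow_zero, hPdef, coeff_map, hC.coeff_one]
    exact Ideal.Quotient.eq_zero_iff_mem.mpr (Ideal.mem_span_singleton_self M)
  have h0 : P.coeff n = 0 := coeff_eq_zero_of_lt_natTrailingDegree (hn.trans_le hle)
  rw [hPdef, coeff_map] at h0
  exact Ideal.mem_span_singleton.mp (Ideal.Quotient.eq_zero_iff_mem.mp h0)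

/-- `C_M(Z) / Z` is Eisenstein at `M`. -/
lemma exists_irreducible_factor (hC : IsCarlitzModule Fq Carl) (hM : M.Monic)
    (hirr : Irreducible M) :
    ∃ Q : Fq[X][X], Carl M = X * Q ∧ Q.Monic ∧
      Q.natDegree = Fintype.card Fq ^ M.natDegree - 1 ∧ Irreducible Q := by
  obtain ⟨Q, hQ⟩ := X_dvd_iff.mpr (hC.coeff_zero M)
  obtain ⟨hmon, hdeg⟩ := hC.monic_and_natDegree hM
  have hQmon : Q.Monic := by
    rw [hQ] at hmon; exact monic_X.of_mul_monic_left hmon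
  have hQdeg : Q.natDegree = Fintype.card Fq ^ M.natDegree - 1 := by
    rw [← hdeg, hQ, natDegree_X_mul hQmon.ne_zero, Nat.add_sub_cancel]
  have hprime : (Ideal.span {M}).IsPrime :=
    (PrincipalIdealRing.isMaximal_of_irreducible hirr).isPrime
  have hcoeff (n : ℕ) : Q.coeff n = (Carl M).coeff (n + 1) := by rw [hQ, coeff_X_mul]
  have hpos : 0 < Q.natDegree := by
    rw [hQdeg]
    exact Nat.sub_pos_of_lt (Nat.one_lt_pow hirr.natDegree_pos.ne' Fintype.one_lt_card)
  refine ⟨Q, hQ, hQmon, hQdeg, IsEisensteinAt.irreducible (𝓟 := Ideal.span {M}) ?_ hprime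
    hQmon.isPrimitive hpos⟩
  refine ⟨?_, fun {n} hn => ?_, ?_⟩
  · rw [hQmon.leadingCoeff]
    exact fun h => hprime.ne_top ((Ideal.eq_top_iff_one _).mpr h)
  · rw [hcoeff, Ideal.mem_span_singleton]
    exact hC.dvd_coeff hM hirr (by omega)
  · rw [hcoeff, zero_add, hC.coeff_one, Ideal.span_singleton_pow, Ideal.mem_span_singleton]
    intro h
    exact hirr.not_isUnit (isUnit_of_dvd_one <| by
      rw [pow_two] at h
      exact (mul_dvd_mul_iff_left hirr.ne_zero).mp (by simpa using h))

section Torsion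

variable {K : Type*} [Field K] [Algebra (RatFunc Fq) K]

lemma act_mul (hC : IsCarlitzModule Fq Carl) (N N' : Fq[X]) (x : K) :
    act Carl (N * N') x = act Carl N (act Carl N' x) := by
  simp only [act, hC.mul, Polynomial.map_comp, aeval_comp]

lemma act_add (hC : IsCarlitzModule Fq Carl) (N N' : Fq[X]) (x : K) :
    act Carl (N + N') x = act Carl N x + act Carl N' x := by
  simp [act, hC.add]

lemma act_zero_right (hC : IsCarlitzModule Fq Carl) (N : Fq[X]) :
    act Carl N (0 : K) = 0 := by
  simp [act, ← coeff_zero_eq_aeval_zero', hC.coeff_zero]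

lemma act_one (hC : IsCarlitzModule Fq Carl) (x : K) : act Carl 1 x = x := by
  simp [act, hC.one]

lemma act_eq_zero_iff (hC : IsCarlitzModule Fq Carl) (hirr : Irreducible M) {x : K}
    (hx : act Carl M x = 0) (hx0 : x ≠ 0) (N : Fq[X]) : act Carl N x = 0 ↔ M ∣ N := by
  refine ⟨fun hN => ?_, ?_⟩
  · by_contra hdvd
    obtain ⟨u, v, huv⟩ := (hirr.coprime_iff_not_dvd.mpr hdvd)
    refine hx0 ?_
    rw [← hC.act_one x, ← huv, hC.act_add, hC.act_mul, hC.act_mul, hx, hN, hC.act_zero_right,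
      hC.act_zero_right, add_zero]
  · rintro ⟨N', rfl⟩
    rw [mul_comm, hC.act_mul, hx, hC.act_zero_right]

lemma act_eq_act_iff (hC : IsCarlitzModule Fq Carl) (hirr : Irreducible M) {x : K}
    (hx : act Carl M x = 0) (hx0 : x ≠ 0) (N N' : Fq[X]) :
    act Carl N x = act Carl N' x ↔
      Ideal.Quotient.mk (Ideal.span {M}) N = Ideal.Quotient.mk (Ideal.span {M}) N' := by
  rw [Ideal.Quotient.eq, Ideal.mem_span_singleton, ← hC.act_eq_zero_iff hirr hx hx0 (N - N')]
  have := hC.act_add (N - N') N' x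
  rw [sub_add_cancel] at this
  rw [this, add_eq_right]

/-- The `M`-torsion of the Carlitz module is generated by any nonzero element. -/
lemma exists_act_eq (hC : IsCarlitzModule Fq Carl) (hM : M.Monic) (hirr : Irreducible M) {x : K}
    (hx : act Carl M x = 0) (hx0 : x ≠ 0) {y : K} (hy : act Carl M y = 0) :
    ∃ N, act Carl N x = y := by
  set p := (Carl M).map (algebraMap Fq[X] (RatFunc Fq))
  obtain ⟨hmon, hdeg⟩ := hC.monic_and_natDegree hM
  have hp : p ≠ 0 := (hmon.map _).ne_zero
  let f : Fq[X] ⧸ Ideal.span {M} → p.rootSet K := fun u =>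
    ⟨act Carl u.out x, mem_rootSet.mpr ⟨hp, by
      change act Carl M (act Carl u.out x) = 0
      rw [← hC.act_mul, mul_comm, hC.act_mul, hx, hC.act_zero_right]⟩⟩
  have hf : Function.Injective f := by
    intro u v huv
    have := (hC.act_eq_act_iff hirr hx hx0 _ _).mp (congrArg Subtype.val huv)
    rwa [Ideal.Quotient.mk_out, Ideal.Quotient.mk_out] at this
  have hcard : Nat.card (p.rootSet K) ≤ Nat.card (Fq[X] ⧸ Ideal.span {M}) := by
    rw [natCard_quotient_span hM, ← hdeg, ← hmon.natDegree_map (algebraMap Fq[X] (RatFunc Fq))]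
    exact p.ncard_rootSet_le K
  obtain ⟨u, hu⟩ := (hf.bijective_of_nat_card_le hcard).2 ⟨y, mem_rootSet.mpr ⟨hp, hy⟩⟩
  exact ⟨u.out, congrArg Subtype.val hu⟩

end Torsion

lemma separable_map (hC : IsCarlitzModule Fq Carl) (hM : M ≠ 0) :
    ((Carl M).map (algebraMap Fq[X] (RatFunc Fq))).Separable := by
  rw [separable_def, derivative_map, hC.derivative, map_C]
  refine ⟨0, C ((algebraMap Fq[X] (RatFunc Fq) M)⁻¹), ?_⟩
  rw [zero_mul, zero_add, ← C_mul, inv_mul_cancel₀, C_1]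
  simpa using hM

section SplittingField

variable {K : Type*} [Field K] [Algebra (RatFunc Fq) K]
  [IsSplittingField (RatFunc Fq) K ((Carl M).map (algebraMap Fq[X] (RatFunc Fq)))]

variable (K) in
lemma isGalois (hC : IsCarlitzModule Fq Carl) (hM : M ≠ 0) : IsGalois (RatFunc Fq) K :=
  IsGalois.of_separable_splitting_field (hC.separable_map hM)

lemma adjoin_eq_top (hC : IsCarlitzModule Fq Carl) (hM : M.Monic) (hirr : Irreducible M) {x : K}
    (hx : act Carl M x = 0) (hx0 : x ≠ 0) : Algebra.adjoin (RatFunc Fq) {x} = ⊤ := by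
  rw [eq_top_iff, ← IsSplittingField.adjoin_rootSet K
    ((Carl M).map (algebraMap Fq[X] (RatFunc Fq))), Algebra.adjoin_le_iff]
  intro y hy
  obtain ⟨N, rfl⟩ := hC.exists_act_eq hM hirr hx hx0 (mem_rootSet.mp hy).2
  exact aeval_mem_adjoin_singleton _ _

lemma finrank_of_root (hC : IsCarlitzModule Fq Carl) (hM : M.Monic) (hirr : Irreducible M) {x : K}
    (hx : act Carl M x = 0) (hx0 : x ≠ 0) :
    Module.finrank (RatFunc Fq) K = Fintype.card Fq ^ M.natDegree - 1 := by
  obtain ⟨Q, hQ, hQmon, hQdeg, hQirr⟩ := hC.exists_irreducible_factor hM hirr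
  have hroot : aeval x (Q.map (algebraMap Fq[X] (RatFunc Fq))) = 0 := by
    rw [act, hQ, Polynomial.map_mul, map_X, map_mul, aeval_X] at hx
    exact (mul_eq_zero.mp hx).resolve_left hx0
  have hmin := minpoly.eq_of_irreducible_of_monic
    (hQmon.irreducible_iff_irreducible_map_fraction_map.mp hQirr) hroot (hQmon.map _)
  have hint : IsIntegral (RatFunc Fq) x := ⟨_, hQmon.map _, hroot⟩
  have htop : IntermediateField.adjoin (RatFunc Fq) {x} = ⊤ := by
    rw [← IntermediateField.toSubalgebra_inj, IntermediateField.top_toSubalgebra,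
      IntermediateField.adjoin_simple_toSubalgebra_of_isAlgebraic hint.isAlgebraic, hC.adjoin_eq_top hM hirr hx hx0]
  rw [← hQdeg, ← hQmon.natDegree_map (algebraMap Fq[X] (RatFunc Fq)), hmin,
    ← IntermediateField.adjoin.finrank hint, htop, IntermediateField.finrank_top']

variable (K) in
lemma exists_root_ne_zero (hC : IsCarlitzModule Fq Carl) (hM : M.Monic) (hirr : Irreducible M) :
    ∃ x : K, act Carl M x = 0 ∧ x ≠ 0 := by
  obtain ⟨Q, hQ, hQmon, hQdeg, hQirr⟩ := hC.exists_irreducible_factor hM hirr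
  have hsplit := IsSplittingField.splits K ((Carl M).map (algebraMap Fq[X] (RatFunc Fq)))
  have hsep := hC.separable_map hirr.ne_zero
  have hcard := card_rootSet_eq_natDegree hsep hsplit
  rw [(hC.monic_and_natDegree hM).1.natDegree_map, (hC.monic_and_natDegree hM).2] at hcard
  have : 1 < Fintype.card (((Carl M).map (algebraMap Fq[X] (RatFunc Fq))).rootSet K) := by
    rw [hcard]
    exact Nat.one_lt_pow hirr.natDegree_pos.ne' Fintype.one_lt_card
  obtain ⟨a, b, hab⟩ := Fintype.one_lt_card_iff.mp this
  by_cases ha : (a : K) = 0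
  · exact ⟨b, (mem_rootSet.mp b.2).2, fun hb => hab (Subtype.ext (ha.trans hb.symm))⟩
  · exact ⟨a, (mem_rootSet.mp a.2).2, ha⟩

lemma exists_mulEquiv (hC : IsCarlitzModule Fq Carl) (hM : M.Monic) (hirr : Irreducible M) {x : K}
    (hx : act Carl M x = 0) (hx0 : x ≠ 0) :
    ∃ e : (Fq[X] ⧸ Ideal.span {M})ˣ ≃* (K ≃ₐ[RatFunc Fq] K),
      ∀ (N : Fq[X]) (hN : IsUnit (Ideal.Quotient.mk (Ideal.span {M}) N)),
        e hN.unit x = act Carl N x := by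
  have hex (σ : K ≃ₐ[RatFunc Fq] K) : ∃ N, act Carl N x = σ x :=
    hC.exists_act_eq hM hirr hx hx0 (by
      rw [← AlgEquiv.coe_toAlgHom, ← map_act, hx, map_zero])
  choose n hn using hex
  have hmk := hC.act_eq_act_iff hirr hx hx0
  let χ : (K ≃ₐ[RatFunc Fq] K) →* Fq[X] ⧸ Ideal.span {M} :=
    { toFun := fun σ => Ideal.Quotient.mk _ (n σ)
      map_one' := by
        rw [← map_one (Ideal.Quotient.mk _), ← hmk, hn, hC.act_one, AlgEquiv.one_apply]
      map_mul' := fun σ τ => by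
        rw [← map_mul, ← hmk, hn, AlgEquiv.mul_apply, mul_comm, hC.act_mul, hn, ← hn τ,
          ← AlgEquiv.coe_toAlgHom, map_act, AlgEquiv.coe_toAlgHom] }
  have hχ (σ : K ≃ₐ[RatFunc Fq] K) :
      (χ.toHomUnits σ : Fq[X] ⧸ Ideal.span {M}) = Ideal.Quotient.mk _ (n σ) := rfl
  have hinj : Function.Injective χ.toHomUnits := by
    intro σ τ h
    have h' := congrArg Units.val h
    rw [hχ, hχ, ← hmk, hn, hn] at h'
    have := AlgHom.ext_of_adjoin_eq_top (hC.adjoin_eq_top hM hirr hx hx0)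
      (φ₁ := (σ : K →ₐ[RatFunc Fq] K)) (φ₂ := τ) (by simpa using h')
    exact AlgEquiv.ext fun y => DFunLike.congr_fun this y
  have := hC.isGalois K hirr.ne_zero
  have : FiniteDimensional (RatFunc Fq) K := IsSplittingField.finiteDimensional K
    ((Carl M).map (algebraMap Fq[X] (RatFunc Fq)))
  have := finite_quotient_span hM
  have hbij := hinj.bijective_of_nat_card_le (by
    rw [natCard_units_quotient_span hM hirr, IsGalois.card_aut_eq_finrank,
      hC.finrank_of_root hM hirr hx hx0])
  refine ⟨(MulEquiv.ofBijective _ hbij).symm, fun N hN => ?_⟩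
  set σ := (MulEquiv.ofBijective _ hbij).symm hN.unit with hσ
  rw [← hn, hmk, ← hχ]
  have : χ.toHomUnits σ = hN.unit := (MulEquiv.ofBijective _ hbij).apply_symm_apply _
  rw [this, IsUnit.unit_spec]

end SplittingField

end IsCarlitzModule

/-- For `M ∈ F_q[T]` monic irreducible of degree `d`, the splitting field `K` over
`F = F_q(T)` of the Carlitz polynomial `C_M(Z)` is Galois of degree `q^d - 1` with
Galois group isomorphic to the cyclic group `(F_q[T]/(M))ˣ`, where the automorphism
corresponding to `N mod M` sends a fixed nonzero root `λ` of `C_M` to `C_N(λ)`. -/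
theorem stmt9 (Fq : Type) [Field Fq] [Fintype Fq]
    (Carl : Polynomial Fq → Polynomial (Polynomial Fq))
    (h1 : Carl 1 = X)
    (hT : Carl X = X ^ (Fintype.card Fq) + C X * X)
    (hadd : ∀ M N : Polynomial Fq, Carl (M + N) = Carl M + Carl N)
    (hsmul : ∀ (a : Fq) (M : Polynomial Fq), Carl (C a * M) = C (C a) * Carl M)
    (hmul : ∀ M N : Polynomial Fq, Carl (M * N) = (Carl M).comp (Carl N))
    (M : Polynomial Fq) (hmonic : M.Monic) (hirr : Irreducible M)
    (d : ℕ) (hd : M.natDegree = d)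
    (p : Polynomial (RatFunc Fq))
    (hp : p = (Carl M).map (algebraMap (Polynomial Fq) (RatFunc Fq))) :
    IsGalois (RatFunc Fq) p.SplittingField ∧
    Module.finrank (RatFunc Fq) p.SplittingField = Fintype.card Fq ^ d - 1 ∧
    IsCyclic (Polynomial Fq ⧸ Ideal.span {M})ˣ ∧
    (∀ lam : p.SplittingField, Polynomial.aeval lam p = 0 → lam ≠ 0 →
      ∃ e : (Polynomial Fq ⧸ Ideal.span {M})ˣ ≃*
          (p.SplittingField ≃ₐ[RatFunc Fq] p.SplittingField),
        ∀ (N : Polynomial Fq) (hN : IsUnit (Ideal.Quotient.mk (Ideal.span {M}) N)),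
          (e hN.unit) lam =
            Polynomial.aeval lam
              ((Carl N).map (algebraMap (Polynomial Fq) (RatFunc Fq)))) := by
  have hC : IsCarlitzModule Fq Carl := ⟨h1, hT, hadd, hsmul, hmul⟩
  subst hp hd
  have := PrincipalIdealRing.isMaximal_of_irreducible hirr
  have := finite_quotient_span hmonic
  obtain ⟨x, hx, hx0⟩ := hC.exists_root_ne_zero
    ((Carl M).map (algebraMap Fq[X] (RatFunc Fq))).SplittingField hmonic hirr
  exact ⟨hC.isGalois _ hirr.ne_zero, hC.finrank_of_root hmonic hirr hx hx0, inferInstance,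
    fun lam h h0 => hC.exists_mulEquiv hmonic hirr h h0⟩
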